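/- In the semi-primitive cyclotomic setting with |T_0| = |T_1| = (q−1)/2, define E_0 = {(x,xy) : x ∈ D_0, y ∈ A_0} ∪ {(x,xy) : x ∈ D_1, y ∈ A_1} ∪ {(0,x) : x ∈ D_ε}. Then for every a ∈ F_{q²} with a ≠ 0, ψ_{a,0}(E_0) = (q²−1)/4. -/

import Mathlib

noncomputable section

def zetaP (p : ℕ) : ℂ := Complex.exp (2 * Real.pi * Complex.I / p)

/-- The canonical additive character `ψ(x) = ζ_p^{Tr_{L/F_p}(x)}`. -/
def psiL (p : ℕ) (L : Type) [Field L] [Fintype L] [CharP L p] (x : L) : ℂ :=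
  letI : Algebra (ZMod p) L := ZMod.algebra L p
  zetaP p ^ (Algebra.trace (ZMod p) L x).val

/-- `ψ_{a,b}(E) = Σ_{(x,y)∈E} ψ(ax+by)`. -/
def psiSum (p : ℕ) (L : Type) [Field L] [Fintype L] [CharP L p]
    (a b : L) (E : Set (L × L)) : ℂ :=
  ∑ᶠ z ∈ E, psiL p L (a * z.1 + b * z.2)

/-- a subset of `F_{q²} × F_{q²}` of type Q. -/
def IsTypeQ (p q : ℕ) (L : Type) [Field L] [Fintype L] [CharP L p]
    (E : Set (L × L)) : Prop :=
  E.ncard = (q ^ 4 - 1) / 4 ∧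
    ∀ a b : L, (a, b) ≠ ((0 : L), (0 : L)) →
      psiSum p L a b E = ((q : ℂ) ^ 2 - 1) / 4 ∨
      psiSum p L a b E = (-3 * (q : ℂ) ^ 2 - 1) / 4

/-- the cyclotomic class `C_i^{(N,q²)} = ω^i⟨ω^N⟩`. -/
def cyc (L : Type) [Field L] (ω : L) (N i : ℕ) : Set L :=
  {x | ∃ k : ℕ, x = ω ^ i * (ω ^ N) ^ k}

/-- ω is a primitive element (generator of the multiplicative group). -/
def IsPrim (L : Type) [Field L] (ω : L) : Prop :=
  ∀ x : L, x ≠ 0 → ∃ n : ℕ, x = ω ^ n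

/-!
For `b = 0` the sum `ψ_{a,0}(E₀)` only sees first coordinates. Each nonzero first coordinate `x` is
hit `|A₀|` times if `x ∈ D₀` and `|A₁|` times if `x ∈ D₁`; as `D₀` and `D₁` partition the nonzero
elements and `|A₀| = |A₁|`, these points contribute `|A₀| ∑_{x ≠ 0} ψ(ax) = -|A₀|`, while the points
`(0, x)` contribute `|D_ε| = (q² - 1) / 2`. Finally `ω ^ m ∉ F_q`, so `(1, ω ^ m)` is a basis of
`F_{q²}` over `F_q` and `x ↦ (Tr x, Tr (x ω ^ m))` is a bijection onto `F_q × F_q`; hence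
`|A₀| = |A₁| = |T₀| (q - |T₁|)`.
-/

section CanonicalCharacter

variable (p : ℕ) (L : Type) [Field L] [Fintype L] [CharP L p]

lemma exists_addChar_ne_one_eq_psiL : ∃ ψ : AddChar L ℂ, ψ ≠ 1 ∧ psiL p L = ψ := by
  have hp : Fact p.Prime := ⟨CharP.char_is_prime L p⟩
  let _ : Algebra (ZMod p) L := ZMod.algebra L p
  have hζ : IsPrimitiveRoot (zetaP p) p := Complex.isPrimitiveRoot_exp p hp.out.ne_zero
  let χ : AddChar (ZMod p) ℂ := AddChar.zmodChar p hζ.pow_eq_one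
  refine ⟨χ.compAddMonoidHom (Algebra.trace (ZMod p) L).toAddMonoidHom,
    AddChar.ne_one_iff.mpr ?_, rfl⟩
  obtain ⟨y, hy⟩ := Algebra.trace_surjective (ZMod p) L 1
  have hχ : χ 1 = zetaP p := by
    rw [AddChar.zmodChar_apply, ZMod.val_one, pow_one]
  refine ⟨y, ?_⟩
  change χ (Algebra.trace (ZMod p) L y) ≠ 1
  rw [hy, hχ]
  exact hζ.ne_one hp.out.one_lt

lemma psiL_zero : psiL p L 0 = 1 := by
  obtain ⟨ψ, -, hψ⟩ := exists_addChar_ne_one_eq_psiL p L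
  rw [hψ, AddChar.map_zero_eq_one]

variable {L}

lemma finsum_mem_compl_zero_psiL_mul {a : L} (ha : a ≠ 0) :
    ∑ᶠ x ∈ ({0}ᶜ : Set L), psiL p L (a * x) = -1 := by
  classical
  obtain ⟨ψ, hne, hψ⟩ := exists_addChar_ne_one_eq_psiL p L
  have hsum : ∑ x, ψ (a * x) = 0 := by
    simpa only [mul_comm, if_neg ha, Nat.cast_zero] using
      AddChar.sum_mulShift a (AddChar.IsPrimitive.of_ne_one hne)
  rw [Fintype.sum_eq_add_sum_compl 0, mul_zero, AddChar.map_zero_eq_one] at hsum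
  rw [hψ, ← Finset.coe_singleton, ← Finset.coe_compl, finsum_mem_coe_finset]
  linear_combination hsum

end CanonicalCharacter

section SlopeSets

variable {F : Type*}

/-- The points `(x, x * y)` with `x ∈ D` and `y ∈ A`, that is, the points with abscissa in `D` on
the lines through the origin whose slope lies in `A`. The first two parts of the paper's `E₀` are
`slopeSet D₀ A₀` and `slopeSet D₁ A₁`. -/
def slopeSet [Mul F] (D A : Set F) : Set (F × F) := {w | ∃ x ∈ D, ∃ y ∈ A, w = (x, x * y)}

/-- The points `(0, x)` with `x ∈ B`, on the one line through the origin that has no slope. The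
third part of the paper's `E₀` is `verticalSet D_ε`. -/
def verticalSet [Zero F] (B : Set F) : Set (F × F) := {w | ∃ x ∈ B, w = (0, x)}

lemma slopeSet_subset_preimage_fst [Mul F] (D A : Set F) : slopeSet D A ⊆ Prod.fst ⁻¹' D := by
  rintro _ ⟨x, hx, y, -, rfl⟩
  exact hx

lemma verticalSet_subset_preimage_fst [Zero F] (B : Set F) : verticalSet B ⊆ Prod.fst ⁻¹' {0} := by
  rintro _ ⟨x, -, rfl⟩
  exact rfl

variable {M : Type*} [AddCommMonoid M]

lemma finsum_mem_slopeSet_fst [Mul F] [Zero F] [IsLeftCancelMulZero F] {D A : Set F}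
    (hD : D.Finite) (hA : A.Finite) (h0 : 0 ∉ D) (g : F → M) :
    ∑ᶠ z ∈ slopeSet D A, g z.1 = A.ncard • ∑ᶠ x ∈ D, g x := by
  lift D to Finset F using hD
  lift A to Finset F using hA
  have himage : slopeSet (D : Set F) A =
      (fun w : F × F => (w.1, w.1 * w.2)) '' (D ×ˢ A : Finset (F × F)) := by
    ext w
    simp [slopeSet, eq_comm, and_assoc]
  have hinj : Set.InjOn (fun w : F × F => (w.1, w.1 * w.2)) (D ×ˢ A : Finset (F × F)) := by
    rintro ⟨x, y⟩ hxy ⟨x', y'⟩ - h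
    obtain ⟨rfl, hy⟩ : x = x' ∧ x * y = x' * y' := Prod.mk.inj h
    have hx : x ≠ 0 := fun hx => h0 (hx ▸ (Finset.mem_product.mp hxy).1)
    rw [mul_left_cancel₀ hx hy]
  rw [himage, finsum_mem_image hinj, finsum_mem_coe_finset, finsum_mem_coe_finset,
    Finset.sum_product, Set.ncard_coe_finset, Finset.smul_sum]
  simp only [Finset.sum_const]

lemma finsum_mem_verticalSet_fst [Zero F] {B : Set F} (hB : B.Finite) (g : F → M) :
    ∑ᶠ z ∈ verticalSet B, g z.1 = B.ncard • g 0 := by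
  lift B to Finset F using hB
  have himage : verticalSet (B : Set F) = (fun x => ((0 : F), x)) '' B := by
    ext w
    simp [verticalSet, eq_comm]
  rw [himage, finsum_mem_image (Prod.mk_right_injective 0).injOn, finsum_mem_coe_finset,
    Set.ncard_coe_finset]
  exact Finset.sum_const (g 0)

end SlopeSets

lemma psiSum_zero_right_slopeSet_union (p : ℕ) {L : Type} [Field L] [Fintype L] [CharP L p]
    {D A₀ A₁ : Set L} (B : Set L) (hD : 0 ∉ D) (hA : A₀.ncard = A₁.ncard) {a : L} (ha : a ≠ 0) :
    psiSum p L a 0 (slopeSet D A₀ ∪ slopeSet ({0}ᶜ \ D) A₁ ∪ verticalSet B) =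
      B.ncard - A₀.ncard := by
  have hD' : (0 : L) ∉ {0}ᶜ \ D := fun h => h.1 rfl
  have hslopes : Disjoint (slopeSet D A₀) (slopeSet ({0}ᶜ \ D) A₁) :=
    (Set.disjoint_sdiff_right.preimage Prod.fst).mono (slopeSet_subset_preimage_fst _ _)
      (slopeSet_subset_preimage_fst _ _)
  have hvertical : Disjoint (slopeSet D A₀ ∪ slopeSet ({0}ᶜ \ D) A₁) (verticalSet B) :=
    Disjoint.union_left
      (((Set.disjoint_singleton_right.mpr hD).preimage Prod.fst).mono
        (slopeSet_subset_preimage_fst _ _) (verticalSet_subset_preimage_fst _))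
      (((Set.disjoint_singleton_right.mpr hD').preimage Prod.fst).mono
        (slopeSet_subset_preimage_fst _ _) (verticalSet_subset_preimage_fst _))
  have hsum : ∑ᶠ x ∈ D, psiL p L (a * x) + ∑ᶠ x ∈ {0}ᶜ \ D, psiL p L (a * x) = -1 := by
    rw [← finsum_mem_compl_zero_psiL_mul p ha,
      finsum_mem_add_sdiff (Set.subset_compl_singleton_iff.mpr hD) (Set.toFinite _)]
  simp only [psiSum, zero_mul, add_zero]
  rw [finsum_mem_union hvertical (Set.toFinite _) (Set.toFinite _),
    finsum_mem_union hslopes (Set.toFinite _) (Set.toFinite _),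
    finsum_mem_slopeSet_fst (Set.toFinite _) (Set.toFinite _) hD (fun x => psiL p L (a * x)),
    finsum_mem_slopeSet_fst (Set.toFinite _) (Set.toFinite _) hD' (fun x => psiL p L (a * x)),
    finsum_mem_verticalSet_fst (Set.toFinite _) (fun x => psiL p L (a * x)),
    ← hA, ← smul_add, hsum, mul_zero, psiL_zero]
  simp only [nsmul_eq_mul]
  ring

section TracePair

lemma finrank_eq_two_of_card_eq_sq {K L : Type*} [Field K] [Field L] [Algebra K L] [Finite L]
    (h : Nat.card L = Nat.card K ^ 2) : Module.finrank K L = 2 := by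
  have : Finite K := .of_injective _ (algebraMap K L).injective
  refine Nat.pow_right_injective (Finite.one_lt_card (α := K)) ?_
  exact Module.natCard_eq_pow_finrank.symm.trans h

variable {K L : Type*} [Field K] [Field L] [Algebra K L]

lemma span_pair_eq_top_of_finrank_eq_two (h2 : Module.finrank K L = 2) {c : L}
    (hc : c ∉ Set.range (algebraMap K L)) : Submodule.span K {1, c} = ⊤ := by
  have hli : LinearIndependent K ![1, c] := by
    refine (LinearIndependent.pair_iff' one_ne_zero).mpr fun r hr => hc ⟨r, ?_⟩
    rw [Algebra.algebraMap_eq_smul_one, hr]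
  rw [← hli.span_eq_top_of_card_eq_finrank (by rw [h2, Fintype.card_fin]),
    Matrix.range_cons_cons_empty]

variable [Algebra.IsSeparable K L]

lemma bijective_trace_prod_trace_mul (h2 : Module.finrank K L = 2) {c : L}
    (hc : c ∉ Set.range (algebraMap K L)) :
    Function.Bijective ((Algebra.trace K L).prod
      (Algebra.trace K L ∘ₗ LinearMap.mulRight K c)) := by
  have : FiniteDimensional K L := .of_finrank_pos (by omega)
  rw [Function.Bijective, ← LinearMap.injective_iff_surjective_of_finrank_eq_finrank
    (by rw [h2, Module.finrank_prod, Module.finrank_self]), and_self,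
    ← LinearMap.ker_eq_bot, LinearMap.ker_eq_bot']
  intro x hx
  obtain ⟨hx1, hxc⟩ : Algebra.trace K L x = 0 ∧ Algebra.trace K L (x * c) = 0 := Prod.mk.inj hx
  have hform : Algebra.traceForm K L x = 0 := by
    refine LinearMap.ext_on (span_pair_eq_top_of_finrank_eq_two h2 hc) ?_
    rintro y (rfl | rfl)
    · simpa [Algebra.traceForm_apply] using hx1
    · simpa [Algebra.traceForm_apply] using hxc
  exact (traceForm_nondegenerate K L).1 x fun y => by rw [hform, LinearMap.zero_apply]

lemma ncard_trace_mem_and_trace_mul_mem (h2 : Module.finrank K L = 2) {c : L}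
    (hc : c ∉ Set.range (algebraMap K L)) (U V : Set K) :
    {x : L | Algebra.trace K L x ∈ U ∧ Algebra.trace K L (x * c) ∈ V}.ncard =
      U.ncard * V.ncard := by
  have hbij := bijective_trace_prod_trace_mul h2 hc
  rw [← Set.ncard_prod, ← Set.ncard_preimage_of_injective_subset_range hbij.injective
    (by simp only [hbij.surjective.range_eq, Set.subset_univ])]
  rfl

lemma ncard_trace_mem_sdiff_trace_mul_mem (h2 : Module.finrank K L = 2) {c : L}
    (hc : c ∉ Set.range (algebraMap K L)) (U V : Set K) :
    ({x : L | Algebra.trace K L x ∈ U} \ {x | Algebra.trace K L (x * c) ∈ V}).ncard =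
      U.ncard * Vᶜ.ncard :=
  ncard_trace_mem_and_trace_mul_mem h2 hc U Vᶜ

lemma ncard_trace_mul_mem_sdiff_trace_mem (h2 : Module.finrank K L = 2) {c : L}
    (hc : c ∉ Set.range (algebraMap K L)) (U V : Set K) :
    ({x : L | Algebra.trace K L (x * c) ∈ V} \ {x | Algebra.trace K L x ∈ U}).ncard =
      Uᶜ.ncard * V.ncard := by
  rw [← ncard_trace_mem_and_trace_mul_mem h2 hc Uᶜ V]
  exact congrArg Set.ncard (Set.inter_comm _ _)

lemma ncard_trace_sdiff_eq_mul_sub [Finite K] (h2 : Module.finrank K L = 2) {c : L}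
    (hc : c ∉ Set.range (algebraMap K L)) {τ : ℕ} {T₀ T₁ : Set K}
    (hT₀ : T₀.ncard = τ) (hT₁ : T₁.ncard = τ) :
    ({x : L | Algebra.trace K L x ∈ T₀} \ {x | Algebra.trace K L (x * c) ∈ T₁}).ncard =
        τ * (Nat.card K - τ) ∧
      ({x : L | Algebra.trace K L (x * c) ∈ T₁} \ {x | Algebra.trace K L x ∈ T₀}).ncard =
        τ * (Nat.card K - τ) := by
  rw [ncard_trace_mem_sdiff_trace_mul_mem h2 hc, ncard_trace_mul_mem_sdiff_trace_mem h2 hc,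
    Set.ncard_compl, Set.ncard_compl, hT₀, hT₁, mul_comm τ]
  exact ⟨rfl, rfl⟩

end TracePair

section PrimitiveElement

variable {L : Type} [Field L] {ω : L}

lemma IsPrim.ne_zero (hω : IsPrim L ω) (hL : 2 < Nat.card L) : ω ≠ 0 := by
  rintro rfl
  have huniv : (Set.univ : Set L) ⊆ {0, 1} := by
    intro x _
    refine or_iff_not_imp_left.mpr fun hx => ?_
    obtain ⟨n, rfl⟩ := hω x hx
    have hn : n = 0 := by_contra fun hn => hx (zero_pow hn)
    rw [hn, pow_zero, Set.mem_singleton_iff]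
  have hcard := Set.ncard_le_ncard huniv
  rw [Set.ncard_univ, Set.ncard_pair zero_ne_one] at hcard
  exact hL.not_ge hcard

lemma IsPrim.orderOf_eq (hω : IsPrim L ω) (h0 : ω ≠ 0) :
    orderOf ω = Nat.card L - 1 := by
  rw [← Nat.card_units, ← Units.val_mk0 h0, orderOf_units]
  refine orderOf_eq_card_of_forall_mem_zpowers fun x => ?_
  obtain ⟨n, hn⟩ := hω x x.ne_zero
  exact ⟨n, Units.ext (by simp [hn])⟩

lemma IsPrim.pow_notMem_range_algebraMap {K : Type*} [Field K] [Algebra K L] [Finite L]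
    (hω : IsPrim L ω) (h0 : ω ≠ 0) {q m : ℕ} (hK : Nat.card K = q) (hL : Nat.card L = q ^ 2)
    (hm : ¬ q + 1 ∣ m) : ω ^ m ∉ Set.range (algebraMap K L) := by
  rintro ⟨y, hy⟩
  have : Finite K := .of_injective _ (algebraMap K L).injective
  have := Fintype.ofFinite K
  have hq : 1 < q := hK ▸ Finite.one_lt_card
  have hy0 : y ≠ 0 := by
    rintro rfl
    exact pow_ne_zero m h0 (by rw [← hy, map_zero])
  have hpow : ω ^ (m * (q - 1)) = 1 := by
    rw [pow_mul, ← hy, ← map_pow, ← hK, Nat.card_eq_fintype_card,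
      FiniteField.pow_card_sub_one_eq_one y hy0, map_one]
  have hdvd := orderOf_dvd_of_pow_eq_one hpow
  rw [hω.orderOf_eq h0, hL, ← one_pow 2, Nat.sq_sub_sq] at hdvd
  exact hm (Nat.dvd_of_mul_dvd_mul_right (Nat.sub_pos_of_lt hq) hdvd)

end PrimitiveElement

section HalfSystem

lemma mem_iff_apply_notMem_of_card_eq_two_mul {α : Type*} [DecidableEq α] {s I : Finset α}
    {f : α → α} (hIs : I ⊆ s) (hcard : s.card = 2 * I.card)
    (hmaps : Set.MapsTo f I (s \ I : Finset α)) (hinv : Set.LeftInvOn f f I) {x : α} (hx : x ∈ s) :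
    x ∈ I ↔ f x ∉ I := by
  refine ⟨fun hxI => (Finset.mem_sdiff.mp (hmaps hxI)).2, fun hfx => by_contra fun hxI => ?_⟩
  have himage : I.image f = s \ I := by
    refine Finset.eq_of_subset_of_card_le (Finset.image_subset_iff.mpr hmaps) ?_
    rw [Finset.card_sdiff_of_subset hIs, Finset.card_image_of_injOn hinv.injOn]
    omega
  obtain ⟨y, hy, rfl⟩ := Finset.mem_image.mp (himage ▸ Finset.mem_sdiff.mpr ⟨hx, hxI⟩)
  exact hfx (by rwa [hinv hy])

lemma mod_mem_iff_add_half_mod_notMem {m : ℕ} (hm : 0 < m) {I : Finset ℕ} (hI : ∀ k ∈ I, k < 2 * m)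
    (hIcard : I.card = m) (hIdisj : ∀ k ∈ I, (k + m) % (2 * m) ∉ I) (n : ℕ) :
    n % (2 * m) ∈ I ↔ (n + m) % (2 * m) ∉ I := by
  have hpos : 0 < 2 * m := by omega
  have hmaps : Set.MapsTo (fun k => (k + m) % (2 * m)) I
      (Finset.range (2 * m) \ I : Finset ℕ) := fun k hk =>
    Finset.mem_sdiff.mpr ⟨Finset.mem_range.mpr (Nat.mod_lt _ hpos), hIdisj k hk⟩
  have hinv : Set.LeftInvOn (fun k => (k + m) % (2 * m)) (fun k => (k + m) % (2 * m)) I := by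
    intro k hk
    change ((k + m) % (2 * m) + m) % (2 * m) = k
    rw [Nat.mod_add_mod, add_assoc, ← two_mul, Nat.add_mod_right, Nat.mod_eq_of_lt (hI k hk)]
  rw [mem_iff_apply_notMem_of_card_eq_two_mul
    (fun k hk => Finset.mem_range.mpr (hI k hk)) (by rw [Finset.card_range, hIcard]) hmaps hinv
    (Finset.mem_range.mpr (Nat.mod_lt n hpos)), Nat.mod_add_mod]

end HalfSystem

section CyclotomicClasses

open scoped Pointwise

lemma ncard_smul_set_of_ne_zero {G₀ M₀ : Type*} [GroupWithZero G₀] [Zero M₀]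
    [MulActionWithZero G₀ M₀] {a : G₀} (ha : a ≠ 0) (s : Set M₀) : (a • s).ncard = s.ncard :=
  Set.natCard_smul_set₀ ha s

variable {L : Type} [Field L] {ω : L}

/-- The union of the cyclotomic classes `C_i^{(N)}` over `i ∈ I`. The paper's `D₀` is
`cycUnion ω (2 * m) K`, and its `D₁` is the dilate `ω ^ m • cycUnion ω (2 * m) K`. -/
def cycUnion (ω : L) (N : ℕ) (I : Finset ℕ) : Set L := ⋃ i ∈ I, cyc L ω N i

lemma cyc_add (ω : L) (N i j : ℕ) : cyc L ω N (i + j) = ω ^ j • cyc L ω N i := by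
  ext x
  simp only [cyc, Set.mem_smul_set, Set.mem_ofPred_eq, smul_eq_mul, pow_add]
  constructor
  · rintro ⟨k, rfl⟩
    exact ⟨_, ⟨k, rfl⟩, by ring⟩
  · rintro ⟨_, ⟨k, rfl⟩, rfl⟩
    exact ⟨k, by ring⟩

lemma biUnion_cyc_add (ω : L) (N : ℕ) (I : Finset ℕ) (j : ℕ) :
    ⋃ i ∈ I, cyc L ω N (i + j) = ω ^ j • cycUnion ω N I := by
  simp only [cycUnion, Set.smul_set_iUnion₂, cyc_add]

lemma zero_notMem_cycUnion (h0 : ω ≠ 0) (N : ℕ) (I : Finset ℕ) : 0 ∉ cycUnion ω N I := by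
  simp only [cycUnion, cyc, Set.mem_iUnion, Set.mem_ofPred_eq, not_exists]
  exact fun i _ k => (mul_ne_zero (pow_ne_zero _ h0) (pow_ne_zero _ (pow_ne_zero _ h0))).symm

lemma pow_mem_cyc_iff (hω : IsOfFinOrder ω) {N : ℕ} (hN : N ∣ orderOf ω) (i n : ℕ) :
    ω ^ n ∈ cyc L ω N i ↔ n ≡ i [MOD N] := by
  simp only [cyc, Set.mem_ofPred_eq, ← pow_mul, ← pow_add, hω.pow_eq_pow_iff_modEq]
  constructor
  · rintro ⟨k, hk⟩
    simpa [Nat.ModEq] using hk.of_dvd hN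
  · intro h
    -- Adding a multiple of the order to `n` makes the truncated subtraction of `i` exact.
    have hle : i ≤ n + orderOf ω * i := le_add_left (Nat.le_mul_of_pos_left i hω.orderOf_pos)
    have hmod : i ≡ n + orderOf ω * i [MOD N] :=
      h.symm.trans ((Nat.ModEq.refl n).add (Nat.modEq_zero_iff_dvd.mpr (hN.mul_right i)).symm)
    obtain ⟨k, hk⟩ := (Nat.modEq_iff_dvd' hle).mp hmod
    refine ⟨k, ?_⟩
    rw [← hk, Nat.add_sub_cancel' hle]
    simp [Nat.ModEq]

lemma pow_mem_cycUnion_iff (hω : IsOfFinOrder ω) {N : ℕ} (hN : N ∣ orderOf ω) {I : Finset ℕ}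
    (hI : ∀ k ∈ I, k < N) (n : ℕ) : ω ^ n ∈ cycUnion ω N I ↔ n % N ∈ I := by
  simp only [cycUnion, Set.mem_iUnion, exists_prop, pow_mem_cyc_iff hω hN]
  constructor
  · rintro ⟨i, hi, h⟩
    have hn : n % N = i := Eq.trans h (Nat.mod_eq_of_lt (hI i hi))
    rwa [hn]
  · exact fun h => ⟨n % N, h, (Nat.mod_modEq n N).symm⟩

section HalfSystem

variable [Finite L] {m : ℕ} {I : Finset ℕ}

lemma IsPrim.pow_smul_cycUnion_eq (hω : IsPrim L ω) (h0 : ω ≠ 0) (hdvd : 2 * m ∣ orderOf ω)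
    (hI : ∀ k ∈ I, k < 2 * m) (hIcard : I.card = m) (hIdisj : ∀ k ∈ I, (k + m) % (2 * m) ∉ I) :
    ω ^ m • cycUnion ω (2 * m) I = {0}ᶜ \ cycUnion ω (2 * m) I := by
  have hfin : IsOfFinOrder ω := isOfFinOrder_iff_isUnit.mpr h0.isUnit
  have hm0 : ω ^ m ≠ 0 := pow_ne_zero m h0
  ext x
  rcases eq_or_ne x 0 with rfl | hx
  · simp [Set.zero_mem_smul_set_iff, hm0, zero_notMem_cycUnion h0]
  obtain ⟨n, hn⟩ := hω ((ω ^ m)⁻¹ * x) (mul_ne_zero (inv_ne_zero hm0) hx)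
  obtain rfl : x = ω ^ m * ω ^ n := by rw [← hn, mul_inv_cancel_left₀ hm0]
  have hpos : 0 < m := by have := Nat.pos_of_dvd_of_pos hdvd hfin.orderOf_pos; omega
  calc ω ^ m * ω ^ n ∈ ω ^ m • cycUnion ω (2 * m) I
    _ ↔ ω ^ n ∈ cycUnion ω (2 * m) I := Set.smul_mem_smul_set_iff₀ hm0 _ _
    _ ↔ ω ^ (n + m) ∉ cycUnion ω (2 * m) I := by
      rw [pow_mem_cycUnion_iff hfin hdvd hI, pow_mem_cycUnion_iff hfin hdvd hI,
        mod_mem_iff_add_half_mod_notMem hpos hI hIcard hIdisj]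
    _ ↔ ω ^ m * ω ^ n ∈ {0}ᶜ \ cycUnion ω (2 * m) I := by
      rw [Set.mem_sdiff, Set.mem_compl_singleton_iff, and_iff_right hx, add_comm, pow_add]

lemma IsPrim.two_mul_ncard_cycUnion (hω : IsPrim L ω) (h0 : ω ≠ 0) (hdvd : 2 * m ∣ orderOf ω)
    (hI : ∀ k ∈ I, k < 2 * m) (hIcard : I.card = m) (hIdisj : ∀ k ∈ I, (k + m) % (2 * m) ∉ I) :
    2 * (cycUnion ω (2 * m) I).ncard + 1 = Nat.card L := by
  have hsub : cycUnion ω (2 * m) I ⊆ {0}ᶜ :=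
    Set.subset_compl_singleton_iff.mpr (zero_notMem_cycUnion h0 _ _)
  have hcard := Set.ncard_sdiff_add_ncard_of_subset hsub
  rw [← hω.pow_smul_cycUnion_eq h0 hdvd hI hIcard hIdisj,
    ncard_smul_set_of_ne_zero (pow_ne_zero m h0), ← two_mul] at hcard
  rw [hcard, ← Set.ncard_singleton (0 : L), Set.ncard_compl_add_ncard]

end HalfSystem

end CyclotomicClasses

lemma half_sq_sub_one_sub_half_mul_half {q : ℕ} (hq : 2 ∣ q + 1) :
    ((q : ℂ) ^ 2 - 1) / 2 - ((q - 1) / 2 : ℕ) * (q - ((q - 1) / 2 : ℕ)) =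
      ((q : ℂ) ^ 2 - 1) / 4 := by
  obtain ⟨j, rfl⟩ : ∃ j, q = 2 * j + 1 := ⟨(q - 1) / 2, by omega⟩
  rw [Nat.add_sub_cancel, Nat.mul_div_cancel_left j two_pos]
  push_cast
  ring

theorem semiprimitive_E0_char_b_zero_general {p q m τ : ℕ} {K : Type*} {L : Type} [Field K]
    [Field L] [Fintype L] [Algebra K L] [CharP L p] (hK : Nat.card K = q) (hL : Nat.card L = q ^ 2)
    {ω : L} (hω : IsPrim L ω) (hdvd : 2 * m ∣ (q + 1) * (q - 1)) (hndvd : ¬ q + 1 ∣ m)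
    {I : Finset ℕ} (hI : ∀ k ∈ I, k < 2 * m) (hIcard : I.card = m)
    (hIdisj : ∀ k ∈ I, (k + m) % (2 * m) ∉ I)
    {D₀ D₁ D : Set L} (hD₀ : D₀ = ⋃ i ∈ I, cyc L ω (2 * m) i)
    (hD₁ : D₁ = ⋃ i ∈ I, cyc L ω (2 * m) (i + m)) (hD : D = D₀ ∨ D = D₁)
    {T₀ T₁ : Set K} (hT₀ : T₀.ncard = τ) (hT₁ : T₁.ncard = τ)
    {S₀ S₁ : Set L} (hS₀ : S₀ = {x | Algebra.trace K L x ∈ T₀})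
    (hS₁ : S₁ = {x | Algebra.trace K L (x * ω ^ m) ∈ T₁}) {a : L} (ha : a ≠ 0) :
    psiSum p L a 0 (slopeSet D₀ (S₀ \ S₁) ∪ slopeSet D₁ (S₁ \ S₀) ∪ verticalSet D) =
      ((q : ℂ) ^ 2 - 1) / 2 - τ * (q - τ) := by
  have : Finite K := .of_injective _ (algebraMap K L).injective
  have hq : 1 < q := hK ▸ Finite.one_lt_card
  have hω0 : ω ≠ 0 := hω.ne_zero (by rw [hL]; nlinarith)
  have hdvd' : 2 * m ∣ orderOf ω := by
    rwa [hω.orderOf_eq hω0, hL, ← one_pow 2, Nat.sq_sub_sq]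
  have h2 : Module.finrank K L = 2 := finrank_eq_two_of_card_eq_sq (by rw [hL, hK])
  have : FiniteDimensional K L := .of_finrank_pos (by omega)
  have hωm : ω ^ m ∉ Set.range (algebraMap K L) :=
    hω.pow_notMem_range_algebraMap hω0 hK hL hndvd
  have hDcard : 2 * D.ncard + 1 = q ^ 2 := by
    rw [← hL, ← hω.two_mul_ncard_cycUnion hω0 hdvd' hI hIcard hIdisj]
    rcases hD with rfl | rfl
    · rw [hD₀, cycUnion]
    · rw [hD₁, biUnion_cyc_add, ncard_smul_set_of_ne_zero (pow_ne_zero m hω0)]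
  obtain ⟨hA₀, hA₁⟩ := ncard_trace_sdiff_eq_mul_sub h2 hωm hT₀ hT₁
  rw [← hS₀, ← hS₁, hK] at hA₀ hA₁
  have hτ : τ ≤ q := hT₀ ▸ hK ▸ Set.ncard_le_card T₀
  obtain rfl : D₁ = {0}ᶜ \ D₀ := by
    rw [hD₁, biUnion_cyc_add, hω.pow_smul_cycUnion_eq hω0 hdvd' hI hIcard hIdisj, hD₀, cycUnion]
  have hDcast : (D.ncard : ℂ) = ((q : ℂ) ^ 2 - 1) / 2 := by
    rw [eq_div_iff two_ne_zero, mul_comm, eq_sub_iff_add_eq]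
    exact_mod_cast hDcard
  rw [psiSum_zero_right_slopeSet_union p D (hD₀ ▸ zero_notMem_cycUnion hω0 _ _)
    (hA₀.trans hA₁.symm) ha, hDcast, hA₀, Nat.cast_mul, Nat.cast_sub hτ]

/-- Lemma 3.3: for `b = 0`, `a ≠ 0`, `ψ_{a,0}(E₀) = (q²−1)/4`. -/
theorem semiprimitive_E0_char_b_zero
    (p s q m l t : ℕ) (hp : p.Prime) (hpodd : p ≠ 2) (hs : 0 < s) (hq : q = p ^ s)
    (hm : 0 < m) (hdvd : 2 * m ∣ q + 1)
    (hl : 0 < l) (hldvd : 2 * m ∣ p ^ l + 1)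
    (hlmin : ∀ l', 0 < l' → 2 * m ∣ p ^ l' + 1 → l ≤ l')
    (ht : s = l * t)
    (K L : Type) [Field K] [Fintype K] [Field L] [Fintype L] [Algebra K L] [CharP L p]
    (hK : Fintype.card K = q) (hL : Fintype.card L = q ^ 2)
    (ω : L) (hω : IsPrim L ω)
    (Kst : Finset ℕ) (hKsub : ∀ k ∈ Kst, k < 2 * m) (hKcard : Kst.card = m)
    (hKdisj : ∀ k ∈ Kst, (k + m) % (2 * m) ∉ Kst)
    (D₀ D₁ : Set L)
    (hD₀ : D₀ = ⋃ i ∈ Kst, cyc L ω (2 * m) i)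
    (hD₁ : D₁ = ⋃ i ∈ Kst, cyc L ω (2 * m) (i + m))
    (T₀ T₁ : Set K)
    (S₀ S₁ : Set L)
    (hS₀ : S₀ = {x : L | Algebra.trace K L x ∈ T₀})
    (hS₁ : S₁ = {x : L | Algebra.trace K L (x * ω ^ m) ∈ T₁})
    (ε : ℕ) (hε : ε = if Even ((p ^ l + 1) / (2 * m)) ∧ Odd t then 1 else 0)
    (Dε : Set L) (hDε : Dε = if ε = 0 then D₀ else D₁)
    (A₀ A₁ : Set L) (hA₀ : A₀ = S₀ \ S₁) (hA₁ : A₁ = S₁ \ S₀)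
    (hT₀ : T₀.ncard = (q - 1) / 2) (hT₁ : T₁.ncard = (q - 1) / 2)
    (E₀ : Set (L × L))
    (hE₀ : E₀ = {w | ∃ x ∈ D₀, ∃ y ∈ A₀, w = (x, x * y)} ∪
      {w | ∃ x ∈ D₁, ∃ y ∈ A₁, w = (x, x * y)} ∪
      {w | ∃ x ∈ Dε, w = ((0 : L), x)})
    : ∀ a : L, a ≠ 0 → psiSum p L a 0 E₀ = ((q : ℂ) ^ 2 - 1) / 4 := by
  intro a ha
  have hndvd : ¬ q + 1 ∣ m := Nat.not_dvd_of_pos_of_lt hm (by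
    have := Nat.le_of_dvd q.succ_pos hdvd
    omega)
  rw [hE₀, hA₀, hA₁, ← half_sq_sub_one_sub_half_mul_half (dvd_of_mul_right_dvd hdvd)]
  exact semiprimitive_E0_char_b_zero_general (Nat.card_eq_fintype_card.trans hK)
    (Nat.card_eq_fintype_card.trans hL) hω (hdvd.mul_right _) hndvd hKsub hKcard hKdisj hD₀ hD₁
    (hDε ▸ ite_eq_or_eq _ _ _) hT₀ hT₁ hS₀ hS₁ ha

end
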